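/- There exist absolute constants 0 < c ≤ C such that for all x, y > 1 and t > 0 with xy > t, one has c·E ≤ p₁(t,x,y) ≤ C·E, where E = min(1, (x−1)(y−1)/t) · (xyt)^{−1/2} · exp(−(x−y)²/(2t)). -/

import Mathlib

open Real MeasureTheory

/-- Modified Bessel function of the first kind, order 0. -/
noncomputable def I0 (z : ℝ) : ℝ := ∑' n : ℕ, (z/2)^(2*n) / ((n.factorial : ℝ))^2

/-- Modified Bessel function of the first kind, order 1. -/
noncomputable def I1 (z : ℝ) : ℝ :=
  ∑' n : ℕ, (z/2)^(2*n+1) / ((n.factorial : ℝ) * ((n+1).factorial : ℝ))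

/-- Heat kernel of the Bessel operator `d²/dx² + (1/x) d/dx` on `(0,∞)`
with respect to the measure `y dy`. -/
noncomputable def pk (t x y : ℝ) : ℝ :=
  t⁻¹ * Real.exp (-(x^2 + y^2)/(2*t)) * I0 (x*y/t)

/-- The function `h` from (AC): Dirichlet heat kernel of `(1/2) d²/dx²` on `(1,∞)`
multiplied by `(xy)⁻¹`. -/
noncomputable def hker (t x y : ℝ) : ℝ :=
  (2*Real.pi*t)^(-(1:ℝ)/2) * (x*y)⁻¹ *
    (Real.exp (-(x-y)^2/(2*t)) - Real.exp (-(x+y-2)^2/(2*t)))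

/-- Bundled hypotheses on the Dirichlet heat kernel `p₁` of the Bessel operator on
`(1,∞)` and on the density `q` of the first hitting time of `1` by the
2-dimensional Bessel process. -/
structure BesselHK (p₁ : ℝ → ℝ → ℝ → ℝ) (q : ℝ → ℝ → ℝ) : Prop where
  meas_p₁ : Measurable fun z : ℝ × ℝ × ℝ => p₁ z.1 z.2.1 z.2.2
  meas_q : Measurable fun z : ℝ × ℝ => q z.1 z.2
  p₁_nonneg : ∀ ⦃t x y : ℝ⦄, 0 < t → 1 < x → 1 < y → 0 ≤ p₁ t x y
  q_nonneg : ∀ ⦃x s : ℝ⦄, 1 < x → 0 < s → 0 ≤ q x s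
  hunt : ∀ ⦃t x y : ℝ⦄, 0 < t → 1 < x → 1 < y →
    p₁ t x y = pk t x y - ∫ u in Set.Ioo 0 t, q x u * pk (t-u) 1 y
  symm : ∀ ⦃t x y : ℝ⦄, 0 < t → 1 < x → 1 < y → p₁ t x y = p₁ t y x
  ck : ∀ ⦃t s x y : ℝ⦄, 0 < t → 0 < s → 1 < x → 1 < y →
    p₁ (t+s) x y = ∫ w in Set.Ioi (1:ℝ), p₁ t x w * p₁ s w y * w
  mass : ∀ ⦃t x : ℝ⦄, 0 < t → 1 < x →
    (∫ y in Set.Ioi (1:ℝ), p₁ t x y * y) = ∫ u in Set.Ioi t, q x u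
  q1 : ∃ c C : ℝ, 0 < c ∧ c ≤ C ∧ ∀ ⦃x s : ℝ⦄, 1 < x → 0 < s →
    ((s < 2*x →
      c * (((x-1)/Real.sqrt x) * s^(-(3:ℝ)/2) * Real.exp (-(x-1)^2/(2*s))) ≤ q x s ∧
      q x s ≤ C * (((x-1)/Real.sqrt x) * s^(-(3:ℝ)/2) * Real.exp (-(x-1)^2/(2*s)))) ∧
     (2*x ≤ s →
      c * (((x-1)/x) * ((1+Real.log x)/((1+Real.log (s+x))*(1+Real.log (1+s/x)))) *
        s⁻¹ * Real.exp (-(x-1)^2/(2*s))) ≤ q x s ∧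
      q x s ≤ C * (((x-1)/x) * ((1+Real.log x)/((1+Real.log (s+x))*(1+Real.log (1+s/x)))) *
        s⁻¹ * Real.exp (-(x-1)^2/(2*s)))))
  q2 : ∀ ⦃x s : ℝ⦄, 1 < x → 0 < s →
    ((x-1)/Real.sqrt (2*Real.pi*x)) * s^(-(3:ℝ)/2) * Real.exp (-(x-1)^2/(2*s)) ≤ q x s
  surv : ∃ c' C' : ℝ, 0 < c' ∧ c' ≤ C' ∧ ∀ ⦃t x : ℝ⦄, 0 < t → 1 < x →
    c' * min 1 (Real.log x / Real.log (1+Real.sqrt t)) ≤ (∫ u in Set.Ioi t, q x u) ∧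
    (∫ u in Set.Ioi t, q x u) ≤ C' * min 1 (Real.log x / Real.log (1+Real.sqrt t))
  ac : ∀ ⦃t x y : ℝ⦄, 0 < t → 1 < x → 1 < y →
    Real.sqrt (x*y) * hker t x y ≤ p₁ t x y ∧
    p₁ t x y ≤ Real.exp (t/8) * Real.sqrt (x*y) * hker t x y

lemma wallis_aux (n : ℕ) :
    ((2*n).factorial : ℝ) / (4^n * (n.factorial:ℝ)^2) ≤ 1 ∧
    (((2*n).factorial : ℝ) / (4^n * (n.factorial:ℝ)^2))^2 ≤ 1/(2*n+1) := by
  have key : (((2*n).factorial : ℝ) / (4^n * (n.factorial:ℝ)^2))^2 ≤ 1/(2*n+1) := by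
    induction n with
    | zero => simp
    | succ k ih =>
      have h1 : ((2*(k+1)).factorial : ℝ) / (4^(k+1) * ((k+1).factorial:ℝ)^2)
          = ((2*k).factorial : ℝ) / (4^k * (k.factorial:ℝ)^2) * ((2*k+1)/(2*k+2)) := by
        have : 2*(k+1) = (2*k+1)+1 := by ring
        rw [this, Nat.factorial_succ, Nat.factorial_succ, Nat.factorial_succ]
        have : (k.factorial : ℝ) ≠ 0 := by positivity
        push_cast
        field_simp
        ring
      rw [h1, mul_pow]
      calc _ ≤ (1/(2*(k:ℝ)+1)) * ((2*(k:ℝ)+1)/(2*k+2))^2 := by gcongr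
        _ ≤ _ := by
          push_cast
          have : (0:ℝ) ≤ k := by positivity
          rw [div_pow, div_mul_div_comm, div_le_div_iff₀ (by positivity) (by positivity)]
          nlinarith [mul_nonneg this this]
  refine ⟨?_, key⟩
  have h2 : (1:ℝ)/(2*n+1) ≤ 1 := by
    rw [div_le_one (by positivity)]
    have : (0:ℝ) ≤ n := by positivity
    linarith
  have h3 := key.trans h2
  nlinarith

lemma I0_le (z : ℝ) (hz : 0 < z) : I0 z ≤ Real.exp z / Real.sqrt z := by
  have hs : 0 < Real.sqrt z := Real.sqrt_pos.2 hz
  have hsq : Real.sqrt z * Real.sqrt z = z := Real.mul_self_sqrt hz.le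
  have hc := (Real.hasSum_cosh z).mul_left ((Real.sqrt z)⁻¹)
  have hh := (Real.hasSum_sinh z).mul_left ((Real.sqrt z)⁻¹)
  have hsum := hc.add hh
  have hle : ∀ n : ℕ, (z/2)^(2*n) / ((n.factorial : ℝ))^2 ≤
      (Real.sqrt z)⁻¹ * (z ^ (2 * n) / ((2 * n).factorial : ℝ)) +
      (Real.sqrt z)⁻¹ * (z ^ (2 * n + 1) / ((2 * n + 1).factorial : ℝ)) := by
    intro n
    obtain ⟨-, h2⟩ := wallis_aux n
    set a := ((2*n).factorial : ℝ) / (4^n * (n.factorial:ℝ)^2) with ha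
    have hf : (0:ℝ) < (2*n).factorial := by positivity
    have hf' : (0:ℝ) < n.factorial := by positivity
    have e1 : (z/2)^(2*n) / ((n.factorial : ℝ))^2 = (z ^ (2 * n) / ((2 * n).factorial : ℝ)) * a := by
      have : (4:ℝ)^n = 2^(2*n) := by rw [pow_mul]; norm_num
      rw [ha, div_pow, this]
      field_simp
    have e2 : (Real.sqrt z)⁻¹ * (z ^ (2 * n + 1) / ((2 * n + 1).factorial : ℝ))
        = (z ^ (2 * n) / ((2 * n).factorial : ℝ)) * (Real.sqrt z * (1/(2*n+1))) := by
      rw [Nat.factorial_succ, pow_succ]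
      push_cast
      field_simp
      nlinarith
    rw [e1, e2, mul_comm (Real.sqrt z)⁻¹, ← mul_add]
    apply mul_le_mul_of_nonneg_left _ (by positivity)
    calc a ≤ (Real.sqrt z)⁻¹ + Real.sqrt z * a^2 := by
          rw [← sub_nonneg]
          have : (Real.sqrt z)⁻¹ + Real.sqrt z * a^2 - a
            = (Real.sqrt z)⁻¹ * ((1 - Real.sqrt z * a / 2)^2 + 3/4 * (Real.sqrt z * a)^2) := by
            field_simp
            ring
          rw [this]; positivity
      _ ≤ _ := by gcongr
  have hnn : ∀ n : ℕ, 0 ≤ (z/2)^(2*n) / ((n.factorial : ℝ))^2 := fun n => by positivity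
  have hS : Summable fun n : ℕ => (z/2)^(2*n) / ((n.factorial : ℝ))^2 :=
    Summable.of_nonneg_of_le hnn hle hsum.summable
  have := hasSum_le hle hS.hasSum hsum
  rw [← mul_add, Real.cosh_add_sinh] at this
  unfold I0
  rw [div_eq_inv_mul (Real.exp z)]
  exact this

lemma I0_nonneg (z : ℝ) : 0 ≤ I0 z := by
  unfold I0
  refine tsum_nonneg fun n => ?_
  rw [pow_mul]; positivity

lemma pk_nonneg {t : ℝ} (ht : 0 < t) (x y : ℝ) : 0 ≤ pk t x y := by
  unfold pk
  have := I0_nonneg (x*y/t)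
  positivity

lemma pk_le {t x y : ℝ} (ht : 0 < t) (hx : 0 < x) (hy : 0 < y) :
    pk t x y ≤ (Real.sqrt (x*y*t))⁻¹ * Real.exp (-(x-y)^2/(2*t)) := by
  unfold pk
  have hz : 0 < x*y/t := by positivity
  have e : t⁻¹ * Real.exp (-(x^2 + y^2)/(2*t)) * (Real.exp (x*y/t) / Real.sqrt (x*y/t))
      = (Real.sqrt (x*y*t))⁻¹ * Real.exp (-(x-y)^2/(2*t)) := by
    have h1 : Real.exp (-(x-y)^2/(2*t)) = Real.exp (-(x^2 + y^2)/(2*t)) * Real.exp (x*y/t) := by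
      rw [← Real.exp_add]; congr 1; field_simp; ring
    have h2 : Real.sqrt (x*y*t) = t * Real.sqrt (x*y/t) := by
      rw [show x*y*t = t^2 * (x*y/t) by field_simp, Real.sqrt_mul (by positivity),
        Real.sqrt_sq ht.le]
    rw [h1, h2]
    have : 0 < Real.sqrt (x*y/t) := Real.sqrt_pos.2 hz
    field_simp
  rw [← e]
  exact mul_le_mul_of_nonneg_left (I0_le _ hz) (by positivity)

lemma p1_le {p₁ : ℝ → ℝ → ℝ → ℝ} {q : ℝ → ℝ → ℝ} (H : BesselHK p₁ q)
    {t x y : ℝ} (ht : 0 < t) (hx : 1 < x) (hy : 1 < y) :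
    p₁ t x y ≤ (Real.sqrt (x*y*t))⁻¹ * Real.exp (-(x-y)^2/(2*t)) := by
  refine le_trans ?_ (pk_le ht (by linarith) (by linarith))
  rw [H.hunt ht hx hy]
  have : 0 ≤ ∫ u in Set.Ioo 0 t, q x u * pk (t-u) 1 y := by
    refine setIntegral_nonneg measurableSet_Ioo fun u hu => ?_
    exact mul_nonneg (H.q_nonneg hx hu.1) (pk_nonneg (by linarith [hu.2]) _ _)
  linarith

lemma hker_eq {t x y : ℝ} (ht : 0 < t) (hx : 1 < x) (hy : 1 < y) :
    Real.sqrt (x*y) * hker t x y = (Real.sqrt (2*Real.pi))⁻¹ *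
      ((1 - Real.exp (-(2*((x-1)*(y-1)/t)))) *
      (Real.sqrt (x*y*t))⁻¹ * Real.exp (-(x-y)^2/(2*t))) := by
  unfold hker
  have hxy : 0 < x*y := by nlinarith
  have h1 : Real.exp (-(x+y-2)^2/(2*t)) =
      Real.exp (-(x-y)^2/(2*t)) * Real.exp (-(2*((x-1)*(y-1)/t))) := by
    rw [← Real.exp_add]; congr 1; field_simp; ring
  have h2 : (2*Real.pi*t)^(-(1:ℝ)/2) = (Real.sqrt (2*Real.pi))⁻¹ * (Real.sqrt t)⁻¹ := by
    rw [show (-(1:ℝ)/2) = -(1/2) by ring, Real.rpow_neg (by positivity), ← Real.sqrt_eq_rpow,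
      Real.sqrt_mul (by positivity), mul_inv]
  have h3 : (x*y)⁻¹ = (Real.sqrt (x*y))⁻¹ * (Real.sqrt (x*y))⁻¹ := by
    rw [← mul_inv, Real.mul_self_sqrt hxy.le]
  rw [h1, h2, h3, Real.sqrt_mul hxy.le t]
  have : 0 < Real.sqrt (x*y) := Real.sqrt_pos.2 hxy
  have : 0 < Real.sqrt t := Real.sqrt_pos.2 ht
  have : 0 < Real.sqrt (2*Real.pi) := Real.sqrt_pos.2 (by positivity)
  field_simp

lemma one_sub_exp_le {a : ℝ} (ha : 0 ≤ a) : 1 - Real.exp (-(2*a)) ≤ 2 * min 1 a := by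
  have h1 := Real.add_one_le_exp (-(2*a))
  have h2 := Real.exp_pos (-(2*a))
  rcases min_cases 1 a with h | h <;> rw [h.1] <;> linarith

lemma le_one_sub_exp {a : ℝ} (ha : 0 ≤ a) : (1/2) * min 1 a ≤ 1 - Real.exp (-(2*a)) := by
  have h1 := Real.add_one_le_exp (2*a)
  have h2 : Real.exp (-(2*a)) ≤ (2*a+1)⁻¹ := by
    rw [Real.exp_neg]; exact inv_anti₀ (by linarith) h1
  have h3 : (2*a+1)⁻¹ ≤ 1 - (1/2) * min 1 a := by
    rw [inv_le_iff_one_le_mul₀ (by linarith)]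
    rcases min_cases 1 a with h | h <;> rw [h.1] <;> nlinarith [h.2]
  linarith

lemma kconst : 0 < (Real.sqrt (2*Real.pi))⁻¹ ∧ (Real.sqrt (2*Real.pi))⁻¹ ≤ 1 := by
  have h : 1 ≤ Real.sqrt (2*Real.pi) := by
    rw [Real.one_le_sqrt]; linarith [Real.pi_gt_three]
  exact ⟨by positivity, inv_le_one_of_one_le₀ h⟩

lemma exp_half_le : Real.exp (1/2) ≤ 2 := by
  have h := Real.exp_one_lt_d9
  have h2 : Real.exp (1/2) * Real.exp (1/2) = Real.exp 1 := by rw [← Real.exp_add]; norm_num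
  nlinarith [Real.exp_pos (1/2)]

/-- Upper bound for small times. -/
lemma p1_le_small {p₁ : ℝ → ℝ → ℝ → ℝ} {q : ℝ → ℝ → ℝ} (H : BesselHK p₁ q)
    {t x y : ℝ} (ht : 0 < t) (ht4 : t ≤ 4) (hx : 1 < x) (hy : 1 < y) :
    p₁ t x y ≤ 4 * (min 1 ((x-1)*(y-1)/t) * (Real.sqrt (x*y*t))⁻¹ *
            Real.exp (-(x-y)^2/(2*t))) := by
  have ha : 0 ≤ (x-1)*(y-1)/t := div_nonneg (mul_nonneg (by linarith) (by linarith)) ht.le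
  have h := (H.ac ht hx hy).2
  rw [mul_assoc, hker_eq ht hx hy] at h
  have h1 := one_sub_exp_le ha
  have hm : 0 ≤ min 1 ((x-1)*(y-1)/t) := le_min zero_le_one ha
  have he : Real.exp (t/8) ≤ 2 := (Real.exp_le_exp.2 (by linarith)).trans exp_half_le
  have hk := kconst
  have hpos : 0 ≤ 1 - Real.exp (-(2*((x-1)*(y-1)/t))) := by
    linarith [le_one_sub_exp ha]
  calc p₁ t x y ≤ _ := h
    _ ≤ 2 * (1 * ((2 * min 1 ((x-1)*(y-1)/t)) * (Real.sqrt (x*y*t))⁻¹ *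
            Real.exp (-(x-y)^2/(2*t)))) := by
        gcongr
        exact hk.2
    _ = _ := by ring

lemma gauss_int (m : ℝ) : Integrable (fun w : ℝ => Real.exp (-(w-m)^2/4)) ∧
    (∫ w : ℝ, Real.exp (-(w-m)^2/4)) ≤ 4 := by
  have e : (fun w : ℝ => Real.exp (-(w-m)^2/4)) =
      fun w : ℝ => (fun v : ℝ => Real.exp (-(1/4) * v^2)) (w - m) := by
    funext w; simp only; congr 1; ring
  rw [e]
  constructor
  · exact (integrable_exp_neg_mul_sq (by norm_num : (0:ℝ) < 1/4)).comp_sub_right m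
  · rw [integral_sub_right_eq_self (fun v : ℝ => Real.exp (-(1/4) * v^2)) m, integral_gaussian]
    rw [Real.sqrt_le_left (by norm_num)]
    linarith [Real.pi_le_four]

set_option maxHeartbeats 1000000 in
lemma p1_le_near {p₁ : ℝ → ℝ → ℝ → ℝ} {q : ℝ → ℝ → ℝ} (H : BesselHK p₁ q)
    {t x y : ℝ} (ht : 4 ≤ t) (hx : 1 < x) (hx2 : x < 2) (hy : 1 < y) (hxy : t < x*y) :
    p₁ t x y ≤ 320 * (((x-1)*(y-1)/t) * (Real.sqrt (x*y*t))⁻¹ *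
            Real.exp (-(x-y)^2/(2*t))) := by
  have hy2 : t/2 < y := by nlinarith
  have ht1 : 0 < t - 1 := by linarith
  have ht0 : 0 < t := by linarith
  have hxy0 : 0 < x*y := by linarith
  set m : ℝ := x + (y-x)/t with hm
  set A : ℝ := |m-1|+1 with hA
  have hA0 : 0 < A := by positivity
  set E := Real.exp (-(x-y)^2/(2*t)) with hE
  have hck := H.ck (t := 1) (s := t-1) one_pos ht1 hx hy
  rw [add_sub_cancel] at hck
  set K : ℝ := 8 * (x-1) * (Real.sqrt (x*y*t))⁻¹ * E * A with hK
  have hK0 : 0 ≤ K := by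
    have : 0 < x - 1 := by linarith
    positivity
  have hbound : ∀ w ∈ Set.Ioi (1:ℝ), p₁ 1 x w * p₁ (t-1) w y * w ≤
      K * Real.exp (-(w-m)^2/4) := by
    intro w hw
    have hw : 1 < w := hw
    have b1 := p1_le_small H one_pos (by norm_num) hx hw
    have b2 := p1_le H ht1 hw hy
    have hmin : min 1 ((x-1)*(w-1)/1) ≤ (x-1)*(w-1) := by
      rw [div_one]; exact min_le_right _ _
    have hw0 : 0 < w - 1 := by linarith
    have hx0 : 0 < x - 1 := by linarith
    have b1' : p₁ 1 x w ≤ 4 * (((x-1)*(w-1)) * (Real.sqrt (x*w))⁻¹ * Real.exp (-(x-w)^2/2)) := by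
      refine b1.trans ?_
      rw [mul_one, mul_one]
      gcongr
    -- square roots
    have hr : (Real.sqrt (x*w))⁻¹ * (Real.sqrt (w*y*(t-1)))⁻¹ * w ≤ 2 * (Real.sqrt (x*y*t))⁻¹ := by
      have e1 : Real.sqrt (x*w) * Real.sqrt (w*y*(t-1)) = w * Real.sqrt (x*y*(t-1)) := by
        rw [← Real.sqrt_mul (by positivity), show x*w*(w*y*(t-1)) = w^2*(x*y*(t-1)) by ring,
          Real.sqrt_mul (by positivity), Real.sqrt_sq (by linarith)]
      have e2 : Real.sqrt (x*y*t) ≤ 2 * Real.sqrt (x*y*(t-1)) := by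
        rw [show 2 * Real.sqrt (x*y*(t-1)) = Real.sqrt (2^2*(x*y*(t-1))) by
          rw [Real.sqrt_mul (by positivity) (x*y*(t-1)), Real.sqrt_sq (by norm_num)]]
        apply Real.sqrt_le_sqrt
        nlinarith
      have s1 : 0 < Real.sqrt (x*y*t) := Real.sqrt_pos.2 (by positivity)
      have s2 : 0 < Real.sqrt (x*y*(t-1)) := Real.sqrt_pos.2 (by positivity)
      rw [← mul_inv, e1]
      have : (w * Real.sqrt (x*y*(t-1)))⁻¹ * w = (Real.sqrt (x*y*(t-1)))⁻¹ := by
        field_simp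
      rw [this, ← div_eq_mul_inv, inv_eq_one_div, div_le_div_iff₀ s2 s1]
      linarith
    -- exponentials
    have hexp : Real.exp (-(x-w)^2/2) * Real.exp (-(w-y)^2/(2*(t-1))) ≤
        E * Real.exp (-(w-m)^2/2) := by
      rw [hE, ← Real.exp_add, ← Real.exp_add]
      apply Real.exp_le_exp.2
      have id : -(x-w)^2/2 + -(w-y)^2/(2*(t-1)) =
          -(x-y)^2/(2*t) + -(w-m)^2/2 - (w-m)^2/(2*(t-1)) := by
        rw [hm]; field_simp; ring
      rw [id]
      have : 0 ≤ (w-m)^2/(2*(t-1)) := by positivity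
      linarith
    have hg : (w-1) * Real.exp (-(w-m)^2/2) ≤ A * Real.exp (-(w-m)^2/4) := by
      have e1 : Real.exp (-(w-m)^2/2) = Real.exp (-(w-m)^2/4) * Real.exp (-(w-m)^2/4) := by
        rw [← Real.exp_add]; congr 1; ring
      rw [e1, ← mul_assoc]
      apply mul_le_mul_of_nonneg_right _ (Real.exp_pos _).le
      have e2 := Real.add_one_le_exp ((w-m)^2/4)
      have e3 : Real.exp (-(w-m)^2/4) * Real.exp ((w-m)^2/4) = 1 := by
        rw [← Real.exp_add, ← Real.exp_zero]; congr 1; ring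
      have e4 : w - 1 ≤ A * Real.exp ((w-m)^2/4) := by
        have i1 : m - 1 ≤ |m-1| := le_abs_self _
        have i2 := abs_nonneg (m-1)
        have i3 : w - m ≤ (w-m)^2/4 + 1 := by nlinarith [sq_nonneg (w-m-2)]
        have i4 : 0 ≤ (w-m)^2/4 := by positivity
        rw [hA]
        nlinarith [mul_nonneg i2 i4]
      calc (w-1) * Real.exp (-(w-m)^2/4) ≤
          (A * Real.exp ((w-m)^2/4)) * Real.exp (-(w-m)^2/4) := by gcongr
        _ = A * (Real.exp (-(w-m)^2/4) * Real.exp ((w-m)^2/4)) := by ring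
        _ = A := by rw [e3, mul_one]
    have n2 : 0 ≤ p₁ (t-1) w y := H.p₁_nonneg ht1 hw hy
    calc p₁ 1 x w * p₁ (t-1) w y * w ≤
        (4 * (((x-1)*(w-1)) * (Real.sqrt (x*w))⁻¹ * Real.exp (-(x-w)^2/2))) *
        ((Real.sqrt (w*y*(t-1)))⁻¹ * Real.exp (-(w-y)^2/(2*(t-1)))) * w := by
          gcongr
      _ = 4 * (x-1) * (w-1) * ((Real.sqrt (x*w))⁻¹ * (Real.sqrt (w*y*(t-1)))⁻¹ * w) *
          (Real.exp (-(x-w)^2/2) * Real.exp (-(w-y)^2/(2*(t-1)))) := by ring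
      _ ≤ 4 * (x-1) * (w-1) * (2 * (Real.sqrt (x*y*t))⁻¹) * (E * Real.exp (-(w-m)^2/2)) := by
          gcongr
      _ = 8 * (x-1) * (Real.sqrt (x*y*t))⁻¹ * E * ((w-1) * Real.exp (-(w-m)^2/2)) := by ring
      _ ≤ 8 * (x-1) * (Real.sqrt (x*y*t))⁻¹ * E * (A * Real.exp (-(w-m)^2/4)) := by
          gcongr
      _ = _ := by rw [hK]; ring
  obtain ⟨gi, gle⟩ := gauss_int m
  have hI : p₁ t x y ≤ K * 4 := by
    rw [hck]
    calc _ ≤ ∫ w in Set.Ioi (1:ℝ), K * Real.exp (-(w-m)^2/4) := by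
          apply integral_mono_of_nonneg
          · refine (ae_restrict_iff' measurableSet_Ioi).2 (Filter.Eventually.of_forall ?_)
            intro w hw
            have hw : 1 < w := hw
            exact mul_nonneg (mul_nonneg (H.p₁_nonneg one_pos hx hw) (H.p₁_nonneg ht1 hw hy))
              (by linarith)
          · exact (gi.const_mul K).integrableOn
          · exact (ae_restrict_iff' measurableSet_Ioi).2 (Filter.Eventually.of_forall hbound)
      _ ≤ ∫ w : ℝ, K * Real.exp (-(w-m)^2/4) :=
          setIntegral_le_integral (gi.const_mul K)
            (Filter.Eventually.of_forall fun w => mul_nonneg hK0 (Real.exp_pos _).le)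
      _ = K * ∫ w : ℝ, Real.exp (-(w-m)^2/4) := integral_const_mul _ _
      _ ≤ K * 4 := by gcongr
  have hA10 : A ≤ 10 * ((y-1)/t) := by
    have j1 : 0 ≤ (y-x)/t := div_nonneg (by linarith) ht0.le
    have j2 : A = x + (y-x)/t := by
      rw [hA, abs_of_nonneg (by rw [hm]; linarith), hm]; ring
    rw [j2, ← mul_div_assoc, ← sub_nonneg]
    have : 10*(y-1)/t - (x + (y-x)/t) = (10*(y-1) - x*t - (y-x))/t := by
      field_simp; ring
    rw [this]
    apply div_nonneg _ ht0.le
    have j3 : x*t ≤ 2*t := mul_le_mul_of_nonneg_right hx2.le ht0.le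
    linarith
  have hx0 : 0 < x - 1 := by linarith
  calc p₁ t x y ≤ K * 4 := hI
    _ ≤ (8 * (x-1) * (Real.sqrt (x*y*t))⁻¹ * E * (10 * ((y-1)/t))) * 4 := by
        rw [hK]; gcongr
    _ = _ := by ring

lemma p1_upper_near {p₁ : ℝ → ℝ → ℝ → ℝ} {q : ℝ → ℝ → ℝ} (H : BesselHK p₁ q)
    {t x y : ℝ} (ht : 4 ≤ t) (hx : 1 < x) (hx2 : x < 2) (hy : 1 < y) (hxy : t < x*y) :
    p₁ t x y ≤ 320 * (min 1 ((x-1)*(y-1)/t) * (Real.sqrt (x*y*t))⁻¹ *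
            Real.exp (-(x-y)^2/(2*t))) := by
  have h1 := p1_le_near H ht hx hx2 hy hxy
  have h2 := p1_le H (show (0:ℝ) < t by linarith) hx hy
  have hG : 0 ≤ (Real.sqrt (x*y*t))⁻¹ * Real.exp (-(x-y)^2/(2*t)) := by positivity
  rcases min_cases 1 ((x-1)*(y-1)/t) with h | h <;> rw [h.1]
  · nlinarith
  · exact h1

theorem bessel_heat_kernel_estimate_large (p₁ : ℝ → ℝ → ℝ → ℝ) (q : ℝ → ℝ → ℝ)
    (H : BesselHK p₁ q) :
    ∃ c C : ℝ, 0 < c ∧ c ≤ C ∧ ∀ t x y : ℝ, 0 < t → 1 < x → 1 < y → t < x*y →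
      c * (min 1 ((x-1)*(y-1)/t) * (Real.sqrt (x*y*t))⁻¹ *
            Real.exp (-(x-y)^2/(2*t))) ≤ p₁ t x y ∧
      p₁ t x y ≤ C * (min 1 ((x-1)*(y-1)/t) * (Real.sqrt (x*y*t))⁻¹ *
            Real.exp (-(x-y)^2/(2*t))) := by
  have hk := kconst
  set k := (Real.sqrt (2*Real.pi))⁻¹ with hkdef
  refine ⟨k/2, 320, by linarith [hk.1], by linarith [hk.2], ?_⟩
  intro t x y ht hx hy hxy
  have hx0 : 0 < x - 1 := by linarith
  have hy0 : 0 < y - 1 := by linarith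
  have ha : 0 ≤ (x-1)*(y-1)/t := by positivity
  have hm : 0 ≤ min 1 ((x-1)*(y-1)/t) := le_min zero_le_one ha
  have hG : 0 ≤ (Real.sqrt (x*y*t))⁻¹ * Real.exp (-(x-y)^2/(2*t)) := by positivity
  constructor
  · refine le_trans ?_ (H.ac ht hx hy).1
    rw [hker_eq ht hx hy, ← hkdef]
    have h1 := le_one_sub_exp ha
    have hk0 := hk.1
    calc _ = k * ((1/2 * min 1 ((x-1)*(y-1)/t)) * (Real.sqrt (x*y*t))⁻¹ *
          Real.exp (-(x-y)^2/(2*t))) := by ring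
      _ ≤ _ := by gcongr
  · rcases le_total t 4 with h4 | h4
    · refine (p1_le_small H ht h4 hx hy).trans ?_
      gcongr
      norm_num
    · rcases lt_or_ge x 2 with hx2 | hx2
      · exact p1_upper_near H h4 hx hx2 hy hxy
      rcases lt_or_ge y 2 with hy2 | hy2
      · have := p1_upper_near H h4 hy hy2 hx (by linarith [mul_comm x y])
        rw [H.symm ht hx hy, mul_comm (x-1), mul_comm x y, show (x-y)^2 = (y-x)^2 by ring]
        exact this
      have hmin : 1/4 ≤ min 1 ((x-1)*(y-1)/t) := by
        apply le_min (by norm_num)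
        rw [le_div_iff₀ ht]
        nlinarith [mul_nonneg (sub_nonneg.2 hx2) (sub_nonneg.2 hy2)]
      refine (p1_le H ht hx hy).trans ?_
      rw [mul_assoc (min _ _)]
      nlinarith
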